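/- Let A be a commutative noetherian local ring, let x, y ∈ A be a regular exact pair of zero divisors, and let a, b ∈ A be elements such that a or b is weakly regular on the A-module A/(x, y). Then there are isomorphisms of A-modules: (a) Hom_A(H_a, G_b) ≅ Hom_A(H_b, G_a) ≅ G_{ab}; (b) Hom_A(G_a, H_b) ≅ Hom_A(G_b, H_a) ≅ H_{ab}. -/

import Mathlib

/-!
Formalization of results from "Construction of totally reflexive modules
from an exact pair of zero divisors" by Henrik Holm.
-/

noncomputable section

/-- Non-units `x, y` in `A` form an *exact pair of zero divisors* if
`Ann_A(x) = (y)` and `Ann_A(y) = (x)`. -/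
def IsExactZeroDivisorPair {A : Type*} [CommRing A] (x y : A) : Prop :=
  ¬ IsUnit x ∧ ¬ IsUnit y ∧
    (∀ a : A, a * x = 0 ↔ a ∈ Ideal.span {y}) ∧
    (∀ a : A, a * y = 0 ↔ a ∈ Ideal.span {x})

open Matrix in
/-- The matrix `γ_a = [[x, a], [0, y]]`. -/
def gammaMat {A : Type*} [CommRing A] (x y a : A) : Matrix (Fin 2) (Fin 2) A :=
  !![x, a; 0, y]

open Matrix in
/-- The matrix `η_a = [[y, -a], [0, x]]`. -/
def etaMat {A : Type*} [CommRing A] (x y a : A) : Matrix (Fin 2) (Fin 2) A :=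
  !![y, -a; 0, x]

/-- `G_a`, the cokernel of `γ_a : A² → A²`. -/
abbrev Gmod {A : Type*} [CommRing A] (x y a : A) : Type _ :=
  (Fin 2 → A) ⧸ LinearMap.range (Matrix.toLin' (gammaMat x y a))

/-- `H_a`, the cokernel of `η_a : A² → A²`. -/
abbrev Hmod {A : Type*} [CommRing A] (x y a : A) : Type _ :=
  (Fin 2 → A) ⧸ LinearMap.range (Matrix.toLin' (etaMat x y a))

/-!
Since `H_a` is the module `G_{-a}` of the swapped pair `(y, x)`, everything reduces to
`Hom(G_a(y, x), G_b(x, y)) ≅ G_{ab}(x, y)`. Here `G_a(x, y)` is generated by `e₀, e₁` subject to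
`x e₀ = 0` and `a e₀ + y e₁ = 0`, and the two maps `(e₀, e₁) ↦ (0, e₀)` and
`(e₀, e₁) ↦ (-x e₁, a e₁)` satisfy the defining relations of `G_{ab}(x, y)`. They generate all
homomorphisms: if `u` is the `e₁`-coordinate of `φ e₀`, the relations satisfied by `φ e₀` and `φ e₁`
put `a u` and `b u` in `(x, y)`, hence also `u`, which pins down `φ e₀`; then `φ e₁` is determined
modulo the annihilator of `x` in `G_b`, which is generated by `e₀`.
-/

namespace IsExactZeroDivisorPair

variable {A : Type*} [CommRing A] {x y : A}

theorem symm (h : IsExactZeroDivisorPair x y) : IsExactZeroDivisorPair y x :=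
  ⟨h.2.1, h.1, h.2.2.2, h.2.2.1⟩

theorem mul_eq_zero_iff_dvd (h : IsExactZeroDivisorPair x y) {c : A} : x * c = 0 ↔ y ∣ c := by
  rw [mul_comm, h.2.2.1, Ideal.mem_span_singleton]

protected theorem mul_eq_zero (h : IsExactZeroDivisorPair x y) : x * y = 0 :=
  h.mul_eq_zero_iff_dvd.2 dvd_rfl

end IsExactZeroDivisorPair

theorem eq_zero_of_dvd_of_dvd_of_span_inf_span {A : Type*} [CommRing A] {x y c : A}
    (hreg : Ideal.span ({x} : Set A) ⊓ Ideal.span ({y} : Set A) = ⊥)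
    (hx : x ∣ c) (hy : y ∣ c) : c = 0 := by
  have hc : c ∈ Ideal.span ({x} : Set A) ⊓ Ideal.span ({y} : Set A) :=
    ⟨Ideal.mem_span_singleton.2 hx, Ideal.mem_span_singleton.2 hy⟩
  rwa [hreg, Ideal.mem_bot] at hc

/-- The pair `a, b` is *jointly regular* on `M` if no nonzero element of `M` is killed by both `a`
and `b`. This is the common weakening of weak regularity of `a` and weak regularity of `b` under
which the homomorphism modules can be computed. -/
def IsJointlySMulRegular {A : Type*} (M : Type*) [Zero M] [SMul A M] (a b : A) : Prop :=
  ∀ ⦃m : M⦄, a • m = 0 → b • m = 0 → m = 0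

namespace IsJointlySMulRegular

theorem of_left {A M : Type*} [Zero M] [SMulZeroClass A M] {a : A} (ha : IsSMulRegular M a)
    (b : A) : IsJointlySMulRegular M a b :=
  fun _ h _ => ha.right_eq_zero_of_smul h

theorem symm {A M : Type*} [Zero M] [SMul A M] {a b : A} (h : IsJointlySMulRegular M a b) :
    IsJointlySMulRegular M b a :=
  fun _ hb ha => h ha hb

theorem neg_left {A M : Type*} [Ring A] [AddCommGroup M] [Module A M] {a b : A}
    (h : IsJointlySMulRegular M a b) : IsJointlySMulRegular M (-a) b :=
  fun _ ha => h (by rwa [neg_smul, neg_eq_zero] at ha)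

theorem neg_right {A M : Type*} [Ring A] [AddCommGroup M] [Module A M] {a b : A}
    (h : IsJointlySMulRegular M a b) : IsJointlySMulRegular M a (-b) :=
  h.symm.neg_left.symm

theorem mem_of_mul_mem {A : Type*} [CommRing A] {I : Ideal A} {a b c : A}
    (h : IsJointlySMulRegular (A ⧸ I) a b) (ha : a * c ∈ I) (hb : b * c ∈ I) : c ∈ I :=
  Ideal.Quotient.eq_zero_iff_mem.1 <|
    h (Ideal.Quotient.eq_zero_iff_mem.2 ha) (Ideal.Quotient.eq_zero_iff_mem.2 hb)

end IsJointlySMulRegular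

theorem toLin'_gammaMat_apply {A : Type*} [CommRing A] (x y a : A) (w : Fin 2 → A) :
    Matrix.toLin' (gammaMat x y a) w = ![x * w 0 + a * w 1, y * w 1] := by
  ext i
  fin_cases i <;> simp [gammaMat, Matrix.mulVec, dotProduct, Fin.sum_univ_two]

namespace Gmod

variable {A : Type*} [CommRing A]

/-- The class in `G_a` of the first standard basis vector of `A²`. -/
def e₀ (x y a : A) : Gmod x y a := Submodule.Quotient.mk ![1, 0]

/-- The class in `G_a` of the second standard basis vector of `A²`. -/
def e₁ (x y a : A) : Gmod x y a := Submodule.Quotient.mk ![0, 1]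

theorem smul_e₀_add_smul_e₁ (x y a c d : A) :
    c • e₀ x y a + d • e₁ x y a = Submodule.Quotient.mk ![c, d] := by
  simp [e₀, e₁, ← Submodule.Quotient.mk_smul, ← Submodule.Quotient.mk_add]

theorem exists_eq_smul_e₀_add_smul_e₁ {x y a : A} (g : Gmod x y a) :
    ∃ c d : A, g = c • e₀ x y a + d • e₁ x y a := by
  obtain ⟨v, rfl⟩ := Submodule.Quotient.mk_surjective _ g
  refine ⟨v 0, v 1, ?_⟩
  rw [smul_e₀_add_smul_e₁]
  congr 1
  ext i
  fin_cases i <;> rfl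

theorem smul_e₀_add_smul_e₁_eq_zero_iff {x y a c d : A} :
    c • e₀ x y a + d • e₁ x y a = 0 ↔ ∃ s t, c = x * s + a * t ∧ d = y * t := by
  rw [smul_e₀_add_smul_e₁, Submodule.Quotient.mk_eq_zero, LinearMap.mem_range]
  constructor
  · rintro ⟨w, hw⟩
    rw [toLin'_gammaMat_apply] at hw
    exact ⟨w 0, w 1, (congrFun hw 0).symm, (congrFun hw 1).symm⟩
  · rintro ⟨s, t, rfl, rfl⟩
    exact ⟨![s, t], toLin'_gammaMat_apply x y a _⟩

theorem smul_e₀_eq_zero (x y a : A) : x • e₀ x y a = 0 := by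
  have h : x • e₀ x y a + (0 : A) • e₁ x y a = 0 :=
    smul_e₀_add_smul_e₁_eq_zero_iff.2 ⟨1, 0, by simp, by simp⟩
  rwa [zero_smul, add_zero] at h

theorem smul_e₀_add_smul_e₁_eq_zero (x y a : A) : a • e₀ x y a + y • e₁ x y a = 0 :=
  smul_e₀_add_smul_e₁_eq_zero_iff.2 ⟨0, 1, by simp, by simp⟩

section Lift

variable {x y a : A} {M : Type*} [AddCommGroup M] [Module A M]

theorem hom_ext {f g : Gmod x y a →ₗ[A] M} (h₀ : f (e₀ x y a) = g (e₀ x y a))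
    (h₁ : f (e₁ x y a) = g (e₁ x y a)) : f = g := by
  refine LinearMap.ext fun m => ?_
  obtain ⟨c, d, rfl⟩ := exists_eq_smul_e₀_add_smul_e₁ m
  simp only [map_add, map_smul, h₀, h₁]

/-- The universal property of `G_a`: the linear map with `e₀ ↦ m₀` and `e₁ ↦ m₁`, for `m₀` and `m₁`
satisfying the relations given by the columns of `γ_a`. -/
def lift (m₀ m₁ : M) (h₀ : x • m₀ = 0) (h₁ : a • m₀ + y • m₁ = 0) : Gmod x y a →ₗ[A] M :=
  Submodule.liftQ _ (Fintype.linearCombination A ![m₀, m₁]) <| by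
    rintro _ ⟨w, rfl⟩
    have hw : w 0 • x • m₀ + w 1 • (a • m₀ + y • m₁) = 0 := by simp [h₀, h₁]
    rw [LinearMap.mem_ker, ← hw]
    simp only [toLin'_gammaMat_apply, Fintype.linearCombination_apply, Fin.sum_univ_two,
      Matrix.cons_val_zero, Matrix.cons_val_one]
    module

variable {m₀ m₁ : M} (h₀ : x • m₀ = 0) (h₁ : a • m₀ + y • m₁ = 0)

@[simp]
theorem lift_e₀ : lift m₀ m₁ h₀ h₁ (e₀ x y a) = m₀ := by
  simp [lift, e₀, Fintype.linearCombination_apply]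

@[simp]
theorem lift_e₁ : lift m₀ m₁ h₀ h₁ (e₁ x y a) = m₁ := by
  simp [lift, e₁, Fintype.linearCombination_apply]

end Lift

variable {x y a b : A}

theorem nonempty_equiv_of_associated (x y : A) (h : Associated a b) :
    Nonempty (Gmod x y a ≃ₗ[A] Gmod x y b) := by
  obtain ⟨u, rfl⟩ := h
  refine ⟨.ofLinearMap
    (lift ((u : A) • e₀ x y (a * u)) (e₁ x y (a * u)) ?_ ?_)
    (lift ((↑u⁻¹ : A) • e₀ x y a) (e₁ x y a) ?_ ?_) (hom_ext ?_ ?_) (hom_ext ?_ ?_)⟩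
  · rw [smul_comm, smul_e₀_eq_zero, smul_zero]
  · rw [smul_smul, smul_e₀_add_smul_e₁_eq_zero]
  · rw [smul_comm, smul_e₀_eq_zero, smul_zero]
  · rw [smul_smul, Units.mul_inv_cancel_right, smul_e₀_add_smul_e₁_eq_zero]
  all_goals simp [smul_smul]

theorem smul_e₀_eq_zero_iff (h : IsExactZeroDivisorPair x y) {c : A} :
    c • e₀ x y a = 0 ↔ x ∣ c := by
  refine ⟨fun hc => ?_, ?_⟩
  · obtain ⟨s, t, hst, ht⟩ := smul_e₀_add_smul_e₁_eq_zero_iff.1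
      (show c • e₀ x y a + (0 : A) • e₁ x y a = 0 by rw [hc, zero_smul, add_zero])
    rw [hst]
    exact dvd_add (dvd_mul_right x s) ((h.symm.mul_eq_zero_iff_dvd.1 ht.symm).mul_left a)
  · rintro ⟨d, rfl⟩
    rw [mul_comm, mul_smul, smul_e₀_eq_zero, smul_zero]

theorem exists_smul_e₀_add_smul_e₁_eq_smul_e₀ {c d : A} (hd : y ∣ d) :
    ∃ p : A, c • e₀ x y a + d • e₁ x y a = p • e₀ x y a := by
  obtain ⟨t, rfl⟩ := hd
  exact ⟨c - t * a, by linear_combination (norm := module) t • smul_e₀_add_smul_e₁_eq_zero x y a⟩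

theorem smul_smul_e₀_add_smul_e₁_eq_zero_iff (h : IsExactZeroDivisorPair x y) {c d : A} :
    y • (c • e₀ x y a + d • e₁ x y a) = 0 ↔ x ∣ y * c - a * d := by
  rw [← smul_e₀_eq_zero_iff (a := a) h]
  have hsplit : y • (c • e₀ x y a + d • e₁ x y a) =
      (y * c - a * d) • e₀ x y a + d • (a • e₀ x y a + y • e₁ x y a) := by module
  rw [hsplit, smul_e₀_add_smul_e₁_eq_zero, smul_zero, add_zero]

theorem exists_eq_smul_e₀_of_smul_eq_zero (hxy : IsExactZeroDivisorPair x y)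
    (hreg : Ideal.span ({x} : Set A) ⊓ Ideal.span ({y} : Set A) = ⊥) {g : Gmod x y a}
    (hg : x • g = 0) : ∃ p : A, g = p • e₀ x y a := by
  obtain ⟨c, d, rfl⟩ := exists_eq_smul_e₀_add_smul_e₁ g
  rw [smul_add, smul_smul, smul_smul, smul_e₀_add_smul_e₁_eq_zero_iff] at hg
  obtain ⟨_, t, -, ht⟩ := hg
  have hd : x * d = 0 :=
    eq_zero_of_dvd_of_dvd_of_span_inf_span hreg (dvd_mul_right x d) ⟨t, ht⟩
  exact exists_smul_e₀_add_smul_e₁_eq_smul_e₀ (hxy.mul_eq_zero_iff_dvd.1 hd)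

theorem exists_eq_mul_smul_e₁ (hxy : IsExactZeroDivisorPair x y)
    (hreg : Ideal.span ({x} : Set A) ⊓ Ideal.span ({y} : Set A) = ⊥)
    (hab : IsJointlySMulRegular (A ⧸ Ideal.span ({x, y} : Set A)) a b) {g g' : Gmod x y b}
    (hg : y • g = 0) (hgg' : a • g + x • g' = 0) : ∃ c : A, g = (x * c) • e₁ x y b := by
  obtain ⟨c, d, rfl⟩ := exists_eq_smul_e₀_add_smul_e₁ g
  obtain ⟨c', d', rfl⟩ := exists_eq_smul_e₀_add_smul_e₁ g'
  have hbd : b * d ∈ Ideal.span ({x, y} : Set A) := by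
    obtain ⟨s, hs⟩ := (smul_smul_e₀_add_smul_e₁_eq_zero_iff hxy).1 hg
    exact Ideal.mem_span_pair.2 ⟨-s, c, by linear_combination hs⟩
  have had : a * d ∈ Ideal.span ({x, y} : Set A) := by
    have hcoord : (a * c + x * c') • e₀ x y b + (a * d + x * d') • e₁ x y b = 0 := by
      rw [← hgg']; module
    obtain ⟨_, t, -, ht⟩ := smul_e₀_add_smul_e₁_eq_zero_iff.1 hcoord
    exact Ideal.mem_span_pair.2 ⟨-d', t, by linear_combination -ht⟩
  obtain ⟨r, s, rfl⟩ := Ideal.mem_span_pair.1 (hab.mem_of_mul_mem had hbd)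
  -- Subtracting `s` times the relation `b e₀ + y e₁ = 0` removes the `s y` from the coordinate.
  obtain ⟨p, hp⟩ := exists_smul_e₀_add_smul_e₁_eq_smul_e₀ (x := x) (a := b) (c := c)
    (dvd_mul_left y s)
  have hsplit : c • e₀ x y b + (r * x + s * y) • e₁ x y b =
      p • e₀ x y b + (x * r) • e₁ x y b := by rw [← hp]; module
  have hyp : y * p = 0 := by
    rw [hsplit, smul_smul_e₀_add_smul_e₁_eq_zero_iff hxy] at hg
    have hx : x ∣ y * p := (dvd_sub_left ⟨b * r, by ring⟩).1 hg
    exact eq_zero_of_dvd_of_dvd_of_span_inf_span hreg hx (dvd_mul_right y p)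
  refine ⟨r, ?_⟩
  rw [hsplit, (smul_e₀_eq_zero_iff hxy).2 (hxy.symm.mul_eq_zero_iff_dvd.1 hyp), zero_add]

/-- The map `G_a(y, x) → G_b(x, y)` with `e₀ ↦ 0` and `e₁ ↦ e₀`, the first of the two generators of
the homomorphism module. -/
def homFst (x y a b : A) : Gmod y x a →ₗ[A] Gmod x y b :=
  lift 0 (e₀ x y b) (smul_zero y) (by rw [smul_zero, smul_e₀_eq_zero, add_zero])

/-- The map `G_a(y, x) → G_b(x, y)` with `e₀ ↦ -x e₁` and `e₁ ↦ a e₁`, the second of the two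
generators of the homomorphism module. -/
def homSnd (a b : A) (h : x * y = 0) : Gmod y x a →ₗ[A] Gmod x y b :=
  lift ((-x) • e₁ x y b) (a • e₁ x y b)
    (by rw [smul_smul, mul_neg, mul_comm y, h, neg_zero, zero_smul]) (by module)

/-- The comparison map from `G_{ab}(x, y)` to `Hom(G_a(y, x), G_b(x, y))`, sending the generators
`e₀` and `e₁` to `homFst` and `homSnd`. -/
def toHom (a b : A) (h : x * y = 0) : Gmod x y (a * b) →ₗ[A] Gmod y x a →ₗ[A] Gmod x y b :=
  lift (homFst x y a b) (homSnd a b h)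
    (hom_ext (by simp [homFst]) (by simp [homFst, smul_e₀_eq_zero]))
    (hom_ext
      (by simp [homFst, homSnd, smul_smul, mul_comm y, h])
      (by
        simp only [homFst, homSnd, LinearMap.add_apply, LinearMap.smul_apply, lift_e₁,
          LinearMap.zero_apply]
        linear_combination (norm := module) a • smul_e₀_add_smul_e₁_eq_zero x y b))

theorem toHom_apply_e₀ (h : x * y = 0) (p q : A) :
    toHom a b h (p • e₀ x y (a * b) + q • e₁ x y (a * b)) (e₀ y x a) =
      (-(x * q)) • e₁ x y b := by
  simp only [toHom, homFst, homSnd, map_add, map_smul, LinearMap.add_apply, LinearMap.smul_apply,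
    lift_e₀, lift_e₁]
  module

theorem toHom_apply_e₁ (h : x * y = 0) (p q : A) :
    toHom a b h (p • e₀ x y (a * b) + q • e₁ x y (a * b)) (e₁ y x a) =
      p • e₀ x y b + (q * a) • e₁ x y b := by
  simp only [toHom, homFst, homSnd, map_add, map_smul, LinearMap.add_apply, LinearMap.smul_apply,
    lift_e₀, lift_e₁]
  module

theorem toHom_injective (hxy : IsExactZeroDivisorPair x y)
    (hreg : Ideal.span ({x} : Set A) ⊓ Ideal.span ({y} : Set A) = ⊥) :
    Function.Injective (toHom a b hxy.mul_eq_zero) := by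
  refine (injective_iff_map_eq_zero _).2 fun g hg => ?_
  obtain ⟨p, q, rfl⟩ := exists_eq_smul_e₀_add_smul_e₁ g
  have h₀ := toHom_apply_e₀ (a := a) (b := b) hxy.mul_eq_zero p q
  have h₁ := toHom_apply_e₁ (a := a) (b := b) hxy.mul_eq_zero p q
  rw [hg, LinearMap.zero_apply, eq_comm] at h₀ h₁
  obtain ⟨d, rfl⟩ : y ∣ q := by
    obtain ⟨_, t, -, ht⟩ := smul_e₀_add_smul_e₁_eq_zero_iff.1
      (show (0 : A) • e₀ x y b + (-(x * q)) • e₁ x y b = 0 by rw [h₀, zero_smul, zero_add])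
    exact hxy.mul_eq_zero_iff_dvd.1 <| eq_zero_of_dvd_of_dvd_of_span_inf_span hreg
      (dvd_mul_right x q) (dvd_neg.1 ⟨t, ht⟩)
  obtain ⟨s, t, hs, ht⟩ := smul_e₀_add_smul_e₁_eq_zero_iff.1 h₁
  obtain ⟨r, hr⟩ : x ∣ t - d * a :=
    hxy.symm.mul_eq_zero_iff_dvd.1 (by linear_combination -ht)
  exact smul_e₀_add_smul_e₁_eq_zero_iff.2
    ⟨s + b * r, d, by linear_combination hs + b * hr, rfl⟩

theorem toHom_surjective (hxy : IsExactZeroDivisorPair x y)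
    (hreg : Ideal.span ({x} : Set A) ⊓ Ideal.span ({y} : Set A) = ⊥)
    (hab : IsJointlySMulRegular (A ⧸ Ideal.span ({x, y} : Set A)) a b) :
    Function.Surjective (toHom a b hxy.mul_eq_zero) := by
  intro φ
  have hφ₀ : y • φ (e₀ y x a) = 0 := by rw [← map_smul, smul_e₀_eq_zero, map_zero]
  have hφ₁ : a • φ (e₀ y x a) + x • φ (e₁ y x a) = 0 := by
    rw [← map_smul, ← map_smul, ← map_add, smul_e₀_add_smul_e₁_eq_zero, map_zero]
  obtain ⟨c, hc⟩ := exists_eq_mul_smul_e₁ hxy hreg hab hφ₀ hφ₁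
  obtain ⟨p, hp⟩ : ∃ p : A, φ (e₁ y x a) + (c * a) • e₁ x y b = p • e₀ x y b := by
    refine exists_eq_smul_e₀_of_smul_eq_zero hxy hreg ?_
    rw [← hφ₁, hc]
    module
  refine ⟨p • e₀ x y (a * b) + (-c) • e₁ x y (a * b), hom_ext ?_ ?_⟩
  · rw [toHom_apply_e₀, hc, mul_neg, neg_neg]
  · rw [toHom_apply_e₁, ← hp]
    module

/-- `Hom(G_a(y, x), G_b(x, y)) ≅ G_{ab}(x, y)`, the inverse of `toHom`. -/
def homEquiv (hxy : IsExactZeroDivisorPair x y)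
    (hreg : Ideal.span ({x} : Set A) ⊓ Ideal.span ({y} : Set A) = ⊥)
    (hab : IsJointlySMulRegular (A ⧸ Ideal.span ({x, y} : Set A)) a b) :
    (Gmod y x a →ₗ[A] Gmod x y b) ≃ₗ[A] Gmod x y (a * b) :=
  (LinearEquiv.ofBijective (toHom a b hxy.mul_eq_zero)
    ⟨toHom_injective hxy hreg, toHom_surjective hxy hreg hab⟩).symm

end Gmod

section

variable {A : Type*} [CommRing A] {x y a b : A}

theorem nonempty_hom_Hmod_Gmod_equiv (hxy : IsExactZeroDivisorPair x y)
    (hreg : Ideal.span ({x} : Set A) ⊓ Ideal.span ({y} : Set A) = ⊥)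
    (hab : IsJointlySMulRegular (A ⧸ Ideal.span ({x, y} : Set A)) a b) :
    Nonempty ((Hmod x y a →ₗ[A] Gmod x y b) ≃ₗ[A] Gmod x y (a * b)) := by
  have hneg : Associated (-a * b) (a * b) := by
    rw [neg_mul]
    exact (Associated.refl _).neg_left
  obtain ⟨e⟩ := Gmod.nonempty_equiv_of_associated x y hneg
  change Nonempty ((Gmod y x (-a) →ₗ[A] Gmod x y b) ≃ₗ[A] Gmod x y (a * b))
  exact ⟨(Gmod.homEquiv hxy hreg hab.neg_left).trans e⟩

theorem nonempty_hom_Gmod_Hmod_equiv (hxy : IsExactZeroDivisorPair x y)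
    (hreg : Ideal.span ({x} : Set A) ⊓ Ideal.span ({y} : Set A) = ⊥)
    (hab : IsJointlySMulRegular (A ⧸ Ideal.span ({x, y} : Set A)) a b) :
    Nonempty ((Gmod x y a →ₗ[A] Hmod x y b) ≃ₗ[A] Hmod x y (a * b)) := by
  rw [inf_comm] at hreg
  rw [Set.pair_comm] at hab
  change Nonempty ((Gmod x y a →ₗ[A] Gmod y x (-b)) ≃ₗ[A] Gmod y x (-(a * b)))
  rw [← mul_neg]
  exact ⟨Gmod.homEquiv hxy.symm hreg hab.neg_right⟩

end

theorem hom_H_G_iso_general {A : Type*} [CommRing A] {x y : A} (hxy : IsExactZeroDivisorPair x y)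
    (hreg : Ideal.span ({x} : Set A) ⊓ Ideal.span ({y} : Set A) = ⊥) {a b : A}
    (hab : IsJointlySMulRegular (A ⧸ Ideal.span ({x, y} : Set A)) a b) :
    Nonempty ((Hmod x y a →ₗ[A] Gmod x y b) ≃ₗ[A] Gmod x y (a * b)) ∧
    Nonempty ((Hmod x y b →ₗ[A] Gmod x y a) ≃ₗ[A] Gmod x y (a * b)) ∧
    Nonempty ((Gmod x y a →ₗ[A] Hmod x y b) ≃ₗ[A] Hmod x y (a * b)) ∧
    Nonempty ((Gmod x y b →ₗ[A] Hmod x y a) ≃ₗ[A] Hmod x y (a * b)) :=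
  ⟨nonempty_hom_Hmod_Gmod_equiv hxy hreg hab,
    mul_comm b a ▸ nonempty_hom_Hmod_Gmod_equiv hxy hreg hab.symm,
    nonempty_hom_Gmod_Hmod_equiv hxy hreg hab,
    mul_comm b a ▸ nonempty_hom_Gmod_Hmod_equiv hxy hreg hab.symm⟩

/-- **Theorem (7.5).** Let `x, y` be a regular exact pair of zero divisors and
let `a, b ∈ A` be such that `a` or `b` is weakly regular on `A/(x, y)`. Then
(a) `Hom_A(H_a, G_b) ≅ Hom_A(H_b, G_a) ≅ G_{ab}` and
(b) `Hom_A(G_a, H_b) ≅ Hom_A(G_b, H_a) ≅ H_{ab}`. -/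
theorem hom_H_G_iso {A : Type*} [CommRing A] [IsNoetherianRing A]
    [IsLocalRing A] {x y : A} (hxy : IsExactZeroDivisorPair x y)
    (hreg : Ideal.span ({x} : Set A) ⊓ Ideal.span ({y} : Set A) = ⊥) {a b : A}
    (hab : (Function.Injective
        fun m : A ⧸ Ideal.span ({x, y} : Set A) => a • m) ∨
      (Function.Injective
        fun m : A ⧸ Ideal.span ({x, y} : Set A) => b • m)) :
    Nonempty ((Hmod x y a →ₗ[A] Gmod x y b) ≃ₗ[A] Gmod x y (a * b)) ∧
    Nonempty ((Hmod x y b →ₗ[A] Gmod x y a) ≃ₗ[A] Gmod x y (a * b)) ∧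
    Nonempty ((Gmod x y a →ₗ[A] Hmod x y b) ≃ₗ[A] Hmod x y (a * b)) ∧
    Nonempty ((Gmod x y b →ₗ[A] Hmod x y a) ≃ₗ[A] Hmod x y (a * b)) :=
  hom_H_G_iso_general hxy hreg <|
    hab.elim (fun ha => .of_left ha b) fun hb => (IsJointlySMulRegular.of_left hb a).symm
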